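/- For every real number a and every d > 0, e^{a/2} · Q(a/d + d/2) + e^{−a/2} · Q(d/2 − a/d) < min(e^{a/2}, e^{−a/2}). (Consequently, in the team setup with 0 < τ < ∞ the Bayes risk of the optimal detector at any positive signal separation is strictly smaller than the Bayes risk of either constant decision rule, so the team solution is always informative.) -/

import Mathlib

/-- The standard Gaussian tail function `Q(x) = ∫_x^∞ (1/√(2π)) e^{-t²/2} dt`. -/
noncomputable def Q (x : ℝ) : ℝ :=
  ∫ t in Set.Ioi x, (1 / Real.sqrt (2 * Real.pi)) * Real.exp (-t ^ 2 / 2)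

/-!
Translating the standard Gaussian density by `d > 0` multiplies it by `e^{-d t - d²/2}`, which is
decreasing in `t`. Bounding this likelihood ratio on the tail `(x, ∞)` by its value at `x` gives
`e^{d (x + d/2)} Q(x + d) < Q(x)`. At `x = a/d - d/2` the exponent is `a`, and the reflection
`Q(-x) = 1 - Q(x)` turns the inequality into the bound by `e^{-a/2}`. The risk is even in `a`, so
the bound by `e^{a/2}` is the same inequality at `-a`.
-/

open MeasureTheory ProbabilityTheory Set
open scoped NNReal

theorem setIntegral_lt_setIntegral_of_forall_lt {X : Type*} [MeasurableSpace X] {μ : Measure X}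
    {s : Set X} {f g : X → ℝ} (hs : MeasurableSet s) (hμs : μ s ≠ 0) (hf : IntegrableOn f s μ)
    (hg : IntegrableOn g s μ) (hfg : ∀ x ∈ s, f x < g x) :
    ∫ x in s, f x ∂μ < ∫ x in s, g x ∂μ := by
  have sub_nonneg_ae : 0 ≤ᵐ[μ.restrict s] fun x ↦ g x - f x :=
    ae_restrict_of_forall_mem hs fun x hx ↦ sub_nonneg.2 (hfg x hx).le
  have subset_support : s ⊆ Function.support fun x ↦ g x - f x :=
    fun x hx ↦ (sub_pos.2 (hfg x hx)).ne'
  rw [← sub_pos, ← integral_sub hg hf,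
    setIntegral_pos_iff_support_of_nonneg_ae sub_nonneg_ae (hg.sub hf),
    inter_eq_right.2 subset_support]
  exact pos_iff_ne_zero.2 hμs

theorem setIntegral_Ioi_comp_add_right {E : Type*} [NormedAddCommGroup E] [NormedSpace ℝ E]
    (f : ℝ → E) (x c : ℝ) : ∫ t in Ioi x, f (t + c) = ∫ t in Ioi (x + c), f t := by
  simpa using (measurePreserving_add_right volume c).setIntegral_preimage_emb
    (measurableEmbedding_addRight c) f (Ioi (x + c))

theorem gaussianPDFReal_neg_neg (μ : ℝ) (v : ℝ≥0) (x : ℝ) :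
    gaussianPDFReal (-μ) v (-x) = gaussianPDFReal μ v x := by
  rw [gaussianPDFReal, gaussianPDFReal, ← neg_sub', neg_sq]

theorem gaussianPDFReal_add_eq_exp_mul (μ : ℝ) (v : ℝ≥0) (x y : ℝ) :
    gaussianPDFReal μ v (x + y) =
      Real.exp (-(y * (x - μ + y / 2)) / v) * gaussianPDFReal μ v x := by
  rw [gaussianPDFReal, gaussianPDFReal, mul_left_comm, ← Real.exp_add]
  ring_nf

theorem Q_eq_setIntegral_gaussianPDFReal (x : ℝ) :
    Q x = ∫ t in Ioi x, gaussianPDFReal 0 1 t := by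
  simp [Q, gaussianPDFReal]

theorem Q_neg (x : ℝ) : Q (-x) = 1 - Q x := by
  have reflect : Q (-x) = ∫ t in Iic x, gaussianPDFReal 0 1 t := by
    have even (t : ℝ) : gaussianPDFReal 0 1 (-t) = gaussianPDFReal 0 1 t := by
      simpa using gaussianPDFReal_neg_neg 0 1 t
    simpa only [even, neg_neg, ← Q_eq_setIntegral_gaussianPDFReal]
      using integral_comp_neg_Ioi (-x) (gaussianPDFReal 0 1)
  have integrable := integrable_gaussianPDFReal 0 1
  rw [eq_sub_iff_add_eq, reflect, Q_eq_setIntegral_gaussianPDFReal,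
    intervalIntegral.integral_Iic_add_Ioi integrable.integrableOn integrable.integrableOn,
    integral_gaussianPDFReal_eq_one 0 one_ne_zero]

theorem exp_mul_Q_add_lt {d : ℝ} (hd : 0 < d) (x : ℝ) :
    Real.exp (d * (x + d / 2)) * Q (x + d) < Q x := by
  have density_lt : ∀ t ∈ Ioi x,
      Real.exp (d * (x + d / 2)) * gaussianPDFReal 0 1 (t + d) < gaussianPDFReal 0 1 t := by
    intro t (hxt : x < t)
    have exponent_neg : d * (x + d / 2) + -(d * (t + d / 2)) < 0 := by
      linarith [mul_lt_mul_of_pos_left hxt hd]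
    rw [gaussianPDFReal_add_eq_exp_mul, sub_zero, NNReal.coe_one, div_one, ← mul_assoc,
      ← Real.exp_add]
    exact mul_lt_of_lt_one_left (gaussianPDFReal_pos 0 1 t one_ne_zero)
      (Real.exp_lt_one_iff.2 exponent_neg)
  have integrable := integrable_gaussianPDFReal 0 1
  simp only [Q_eq_setIntegral_gaussianPDFReal]
  rw [← setIntegral_Ioi_comp_add_right, ← integral_const_mul]
  exact setIntegral_lt_setIntegral_of_forall_lt measurableSet_Ioi (by simp)
    ((integrable.comp_add_right d).const_mul _).integrableOn integrable.integrableOn density_lt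

/-- The Bayes risk of the optimal detector between the Gaussian observations `N(0, 1)` and
`N(d, 1)`, where false alarms and misses carry the prior-weighted costs `e^{a/2}` and `e^{-a/2}`.
For `d > 0` the likelihood-ratio test then has threshold `a/d + d/2`. -/
noncomputable def detectorRisk (a d : ℝ) : ℝ :=
  Real.exp (a / 2) * Q (a / d + d / 2) + Real.exp (-(a / 2)) * Q (d / 2 - a / d)

theorem detectorRisk_neg (a d : ℝ) : detectorRisk (-a) d = detectorRisk a d := by
  simp only [detectorRisk, neg_div, neg_neg, sub_neg_eq_add, neg_add_eq_sub]
  rw [add_comm, add_comm (d / 2)]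

theorem detectorRisk_lt_exp_neg (a : ℝ) {d : ℝ} (hd : 0 < d) :
    detectorRisk a d < Real.exp (-(a / 2)) := by
  have tail_lt : Real.exp a * Q (a / d + d / 2) < Q (a / d - d / 2) := by
    convert exp_mul_Q_add_lt hd (a / d - d / 2) using 3
    · field_simp
      ring
    · ring
  have exp_half : Real.exp (a / 2) = Real.exp (-(a / 2)) * Real.exp a := by
    rw [← Real.exp_add]
    ring_nf
  calc detectorRisk a d
      = Real.exp (-(a / 2)) *
          (Real.exp a * Q (a / d + d / 2) + (1 - Q (a / d - d / 2))) := by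
        rw [detectorRisk, exp_half, ← Q_neg, neg_sub]
        ring
    _ < Real.exp (-(a / 2)) * 1 := by
        gcongr
        linarith
    _ = Real.exp (-(a / 2)) := mul_one _

/-- For every real `a` and every `d > 0`,
`e^{a/2} Q(a/d + d/2) + e^{-a/2} Q(d/2 - a/d) < min(e^{a/2}, e^{-a/2})`:
the team Bayes risk at any positive signal separation is strictly smaller than that of
either constant decision rule, so the team solution is always informative. -/
theorem stmt_6 (a d : ℝ) (hd : 0 < d) :
    Real.exp (a / 2) * Q (a / d + d / 2) + Real.exp (-(a / 2)) * Q (d / 2 - a / d)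
      < min (Real.exp (a / 2)) (Real.exp (-(a / 2))) := by
  have risk_lt_exp : detectorRisk a d < Real.exp (a / 2) := by
    simpa only [detectorRisk_neg, neg_div, neg_neg] using detectorRisk_lt_exp_neg (-a) hd
  exact lt_min risk_lt_exp (detectorRisk_lt_exp_neg a hd)
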